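/- arXiv:1404.5356 — 4 statements merged into one kernel-verified Lean document; each statement's English description precedes it below -/
import Mathlib

section
/- Let S = S(m,ℓ) be the spider with m ≥ 3 legs each having ℓ ≥ 1 vertices, let b be its body, and let 0 ≤ k ≤ ℓ. Then for every vertex v of S, Gain(S, C_S(k), Z(v)) ≥ Gain(S, C_S(k), Z(b)); consequently the guaranteed gain of Player 1 with the strategy C_S(k) is GGain(S, C_S(k)) = Gain(S, C_S(k), Z(b)). -/
/-- The competitive-diffusion payoff of Player 1 with starting vertex `x` against
starting vertex `y`: the number of vertices strictly closer to `x` than to `y`. -/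
noncomputable def gain {V : Type*} (G : SimpleGraph V) (x y : V) : ℕ :=
  {u : V | G.dist u x < G.dist u y}.ncard

/-- The expected gain of Player 1 playing mixed strategy `X` against mixed strategy `Y`. -/
noncomputable def Gain {V : Type*} (G : SimpleGraph V) [Fintype V] (X Y : V → ℝ) : ℝ :=
  ∑ x : V, ∑ y : V, X x * Y y * (gain G x y : ℝ)

/-- The pure strategy `Z(v)` concentrated on vertex `v`. -/
def pureStrat {V : Type*} [DecidableEq V] (v : V) : V → ℝ := fun u => if u = v then 1 else 0

/-- Vertices of a spider with `m` legs each with `ℓ` vertices: `none` is the body,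
`some (s, d)` is the vertex at distance `d+1` from the body on leg `s`. -/
abbrev SpiderVert (m ℓ : ℕ) := Option (Fin m × Fin ℓ)

def spiderRel (m ℓ : ℕ) : SpiderVert m ℓ → SpiderVert m ℓ → Prop
  | none, some (_, d) => d.val = 0
  | some (s, d), some (s', d') => s = s' ∧ d.val + 1 = d'.val
  | _, _ => False

/-- The spider `S(m,ℓ)`: a body vertex to which `m` disjoint paths (legs), each with
`ℓ` vertices, are attached. -/
def Spider (m ℓ : ℕ) : SimpleGraph (SpiderVert m ℓ) := SimpleGraph.fromRel (spiderRel m ℓ)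

/-- The mixed strategy `C_S(k)`: probability `1/(mk+1)` on the body and on each
vertex at distance at most `k` from the body on each leg. -/
noncomputable def CS (m ℓ k : ℕ) : SpiderVert m ℓ → ℝ
  | none => 1 / (m * k + 1)
  | some (_, d) => if d.val + 1 ≤ k then 1 / (m * k + 1) else 0

theorem dist_eq_of_potential {V : Type*} (G : SimpleGraph V) (f : V → V → ℕ)
    (h0 : ∀ x y, f x y = 0 ↔ x = y)
    (hl : ∀ x y z, G.Adj x y → f x z ≤ f y z + 1)
    (hd : ∀ x z, x ≠ z → ∃ y, G.Adj x y ∧ f y z + 1 = f x z) (x z : V) :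
    G.dist x z = f x z := by
  have hw : ∀ n x, f x z = n → ∃ p : G.Walk x z, p.length = n := by
    intro n
    induction n with
    | zero =>
      intro x hx
      obtain rfl := (h0 _ _).1 hx
      exact ⟨SimpleGraph.Walk.nil, rfl⟩
    | succ n ih =>
      intro x hx
      have hne : x ≠ z := by
        intro h
        have := (h0 _ _).2 h
        omega
      obtain ⟨y, hy, hf⟩ := hd x z hne
      obtain ⟨p, hp⟩ := ih y (by omega)
      exact ⟨SimpleGraph.Walk.cons hy p, by simp [hp]⟩
  have hlow : ∀ x (p : G.Walk x z), f x z ≤ p.length := by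
    intro x p
    induction p with
    | nil => simp [(h0 _ _).2 rfl]
    | cons h p ih =>
      have := hl _ _ _ h |>.trans (Nat.add_le_add_right (ih hw) 1)
      simpa using this
  obtain ⟨p, hp⟩ := hw _ x rfl
  apply le_antisymm
  · exact hp ▸ SimpleGraph.dist_le p
  · obtain ⟨q, hq⟩ := p.reachable.exists_walk_length_eq_dist
    rw [← hq]
    exact hlow x q

/-- explicit distance on the spider -/
def sd (m ℓ : ℕ) : SpiderVert m ℓ → SpiderVert m ℓ → ℕ
  | none, none => 0
  | none, some (_, d) => d.val + 1
  | some (_, d), none => d.val + 1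
  | some (s, d), some (t, e) =>
    if s = t then (d.val - e.val) + (e.val - d.val) else d.val + e.val + 2

theorem adj_ns (m ℓ : ℕ) (s : Fin m) (d : Fin ℓ) :
    (Spider m ℓ).Adj none (some (s, d)) ↔ d.val = 0 := by
  simp [Spider, spiderRel]

theorem adj_sn (m ℓ : ℕ) (s : Fin m) (d : Fin ℓ) :
    (Spider m ℓ).Adj (some (s, d)) none ↔ d.val = 0 := by
  simp [Spider, spiderRel]

theorem adj_ss (m ℓ : ℕ) (s t : Fin m) (d e : Fin ℓ) :
    (Spider m ℓ).Adj (some (s, d)) (some (t, e)) ↔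
      s = t ∧ (d.val + 1 = e.val ∨ e.val + 1 = d.val) := by
  simp only [Spider, SimpleGraph.fromRel_adj, spiderRel, ne_eq, Option.some.injEq,
    Prod.mk.injEq, Fin.ext_iff]
  constructor
  · rintro ⟨_, ⟨h1, h2⟩ | ⟨h1, h2⟩⟩
    · exact ⟨h1, Or.inl h2⟩
    · exact ⟨h1.symm, Or.inr h2⟩
  · rintro ⟨h1, h2 | h2⟩
    · exact ⟨by intro h; have := h.2; omega, Or.inl ⟨h1, h2⟩⟩
    · exact ⟨by intro h; have := h.2; omega, Or.inr ⟨h1.symm, h2⟩⟩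

theorem spider_dist (m ℓ : ℕ) (x z : SpiderVert m ℓ) :
    (Spider m ℓ).dist x z = sd m ℓ x z := by
  apply dist_eq_of_potential
  · rintro (_ | ⟨s, d⟩) (_ | ⟨t, e⟩)
    · simp [sd]
    · simp [sd]
    · simp [sd]
    · simp only [sd, Option.some.injEq, Prod.mk.injEq, Fin.ext_iff]
      split_ifs with h
      · constructor
        · intro h'
          exact ⟨h, by omega⟩
        · rintro ⟨_, h'⟩
          omega
      · constructor
        · intro h'
          exact absurd h' (by simp)
        · rintro ⟨h', _⟩
          exact absurd h' h
  · rintro (_ | ⟨s, d⟩) (_ | ⟨t, e⟩) z h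
    · simp at h
    · rw [adj_ns] at h
      rcases z with _ | ⟨r, c⟩ <;> simp only [sd] <;> (try split_ifs) <;> omega
    · rw [adj_sn] at h
      rcases z with _ | ⟨r, c⟩ <;> simp only [sd] <;> (try split_ifs) <;> omega
    · rw [adj_ss] at h
      obtain ⟨rfl, h⟩ := h
      rcases z with _ | ⟨r, c⟩ <;> simp only [sd] <;> (try split_ifs) <;> omega
  · rintro (_ | ⟨s, d⟩) (_ | ⟨r, c⟩) h
    · exact absurd rfl h
    · refine ⟨some (r, ⟨0, c.pos⟩), ?_, ?_⟩
      · simp [Spider, spiderRel]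
      · simp [sd]
    · by_cases hd : d.val = 0
      · refine ⟨none, ?_, ?_⟩
        · simp [Spider, spiderRel, hd]
        · simp [sd, hd]
      · refine ⟨some (s, ⟨d.val - 1, by omega⟩), ?_, ?_⟩
        · exact (adj_ss _ _ _ _ _ _).2 ⟨rfl, by dsimp only; omega⟩
        · simp only [sd]; omega
    · by_cases hs : s = r
      · subst hs
        have hdc : d.val ≠ c.val := by
          intro h'
          exact h (by simp [Fin.ext_iff, h'])
        by_cases hlt : d.val < c.val
        · refine ⟨some (s, ⟨d.val + 1, by omega⟩), ?_, ?_⟩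
          · exact (adj_ss _ _ _ _ _ _).2 ⟨rfl, by dsimp only; omega⟩
          · simp only [sd, if_true]; omega
        · refine ⟨some (s, ⟨d.val - 1, by omega⟩), ?_, ?_⟩
          · exact (adj_ss _ _ _ _ _ _).2 ⟨rfl, by dsimp only; omega⟩
          · simp only [sd, if_true]; omega
      · by_cases hd : d.val = 0
        · refine ⟨none, ?_, ?_⟩
          · simp [Spider, spiderRel, hd]
          · simp [sd, hd, hs]
        · refine ⟨some (s, ⟨d.val - 1, by omega⟩), ?_, ?_⟩
          · exact (adj_ss _ _ _ _ _ _).2 ⟨rfl, by dsimp only; omega⟩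
          · simp only [sd, hs, if_false]; omega

/-- the part of leg `s` from index `c` on -/
def legTail (m ℓ : ℕ) (s : Fin m) (c : ℕ) : Set (SpiderVert m ℓ) :=
  (fun d : Fin ℓ => (some (s, d) : SpiderVert m ℓ)) '' {d | c ≤ d.val}

theorem legTail_ncard (m ℓ : ℕ) (s : Fin m) (c : ℕ) : (legTail m ℓ s c).ncard = ℓ - c := by
  unfold legTail
  rw [Set.ncard_image_of_injective]
  · rw [← Set.ncard_image_of_injective _ Fin.val_injective]
    have : (Fin.val '' {d : Fin ℓ | c ≤ d.val}) = ((Finset.Ico c ℓ : Finset ℕ) : Set ℕ) := by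
      ext x
      simp only [Set.mem_image, Set.mem_ofPred_eq, Finset.coe_Ico, Set.mem_Ico]
      constructor
      · rintro ⟨d, hd, rfl⟩
        exact ⟨hd, d.2⟩
      · rintro ⟨h1, h2⟩
        exact ⟨⟨x, h2⟩, h1, rfl⟩
    rw [this, Set.ncard_coe_finset, Nat.card_Ico]
  · intro a b h
    simpa using h

theorem le_gain (m ℓ : ℕ) (s : Fin m) (c : ℕ) (x y : SpiderVert m ℓ)
    (h : ∀ d : Fin ℓ, c ≤ d.val → sd m ℓ (some (s, d)) x < sd m ℓ (some (s, d)) y) :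
    ℓ - c ≤ gain (Spider m ℓ) x y := by
  rw [← legTail_ncard m ℓ s c]
  apply Set.ncard_le_ncard _ (Set.toFinite _)
  rintro _ ⟨d, hd, rfl⟩
  simpa [spider_dist] using h d hd

theorem gain_body_le (m ℓ : ℕ) (s : Fin m) (d : Fin ℓ) :
    gain (Spider m ℓ) (some (s, d)) none ≤ ℓ - (d.val + 1) / 2 := by
  rw [← legTail_ncard m ℓ s]
  apply Set.ncard_le_ncard _ (Set.toFinite _)
  rintro (_ | ⟨t, e⟩) h
  · simp [spider_dist, sd] at h
  · simp only [spider_dist, sd, Set.mem_ofPred_eq] at h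
    split_ifs at h with hts
    · subst hts
      exact ⟨e, by simp only [Set.mem_ofPred_eq]; omega, rfl⟩
    · omega

theorem gain_body_body (m ℓ : ℕ) : gain (Spider m ℓ) none none = 0 := by
  simp [gain]

theorem exists_other (m : ℕ) (hm : 3 ≤ m) (t : Fin m) : ∃ s : Fin m, s ≠ t := by
  by_cases h : t.val = 0
  · exact ⟨⟨1, by omega⟩, by simp [Fin.ext_iff, h]⟩
  · exact ⟨⟨0, by omega⟩, by simp [Fin.ext_iff]; omega⟩

theorem le_gain_body (m ℓ : ℕ) (hm : 3 ≤ m) (t : Fin m) (e : Fin ℓ) :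
    ℓ ≤ gain (Spider m ℓ) none (some (t, e)) := by
  obtain ⟨s, hs⟩ := exists_other m hm t
  refine le_gain m ℓ s 0 _ _ ?_
  intro d _
  simp only [sd, hs, if_false]; omega

theorem le_gain_other (m ℓ : ℕ) (s t : Fin m) (hs : s ≠ t) (d e : Fin ℓ) :
    ℓ - (d.val - e.val) / 2 ≤ gain (Spider m ℓ) (some (s, d)) (some (t, e)) := by
  refine le_gain m ℓ s _ _ _ ?_
  intro c _
  simp only [sd, hs, if_false, if_true]; omega

theorem le_gain_same_lt (m ℓ : ℕ) (hm : 3 ≤ m) (t : Fin m) (d e : Fin ℓ) (h : d.val < e.val) :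
    ℓ ≤ gain (Spider m ℓ) (some (t, d)) (some (t, e)) := by
  obtain ⟨s, hs⟩ := exists_other m hm t
  refine le_gain m ℓ s 0 _ _ ?_
  intro c _
  simp only [sd, hs, if_false]; omega

theorem le_gain_same_gt (m ℓ : ℕ) (t : Fin m) (d e : Fin ℓ) (h : e.val < d.val) :
    ℓ - (d.val + e.val + 2) / 2 ≤ gain (Spider m ℓ) (some (t, d)) (some (t, e)) := by
  refine le_gain m ℓ t _ _ _ ?_
  intro c _
  simp only [sd, if_true]; omega

/-- lower bound for the total gain difference at level `d` -/
def lev (ℓ e d : ℕ) : ℤ :=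
  if d < e then 0 else if d = e then -((ℓ : ℤ) - ((e : ℤ) + 1) / 2)
  else if d % 2 = 1 then 1 else -1

theorem level_bound (m ℓ : ℕ) (hm : 3 ≤ m) (t : Fin m) (d e : Fin ℓ) :
    lev ℓ e.val d.val ≤ ∑ s : Fin m, ((gain (Spider m ℓ) (some (s, d)) (some (t, e)) : ℤ)
      - (gain (Spider m ℓ) (some (s, d)) none : ℤ)) := by
  rw [← Finset.add_sum_erase _ _ (Finset.mem_univ t)]
  have h1 : ((m : ℤ) - 1) * (((d.val + 1) / 2 - (d.val - e.val) / 2 : ℕ) : ℤ) ≤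
      ∑ s ∈ Finset.univ.erase t, ((gain (Spider m ℓ) (some (s, d)) (some (t, e)) : ℤ)
      - (gain (Spider m ℓ) (some (s, d)) none : ℤ)) := by
    have := Finset.card_nsmul_le_sum (Finset.univ.erase t)
      (fun s => ((gain (Spider m ℓ) (some (s, d)) (some (t, e)) : ℤ)
      - (gain (Spider m ℓ) (some (s, d)) none : ℤ)))
      (((d.val + 1) / 2 - (d.val - e.val) / 2 : ℕ) : ℤ) (by
        intro s hs
        have a := le_gain_other m ℓ s t (Finset.ne_of_mem_erase hs) d e
        have b := gain_body_le m ℓ s d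
        have := d.2
        omega)
    rw [Finset.card_erase_of_mem (Finset.mem_univ t), Finset.card_univ, Fintype.card_fin,
      nsmul_eq_mul, Nat.cast_sub (by omega)] at this
    exact_mod_cast this
  have h2 : (2 : ℤ) * (((d.val + 1) / 2 - (d.val - e.val) / 2 : ℕ) : ℤ) ≤
      ((m : ℤ) - 1) * (((d.val + 1) / 2 - (d.val - e.val) / 2 : ℕ) : ℤ) := by
    apply mul_le_mul_of_nonneg_right
    · omega
    · positivity
  have h3 := h2.trans h1
  have h4 := gain_body_le m ℓ t d
  have := d.2
  have := e.2
  unfold lev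
  split_ifs with c1 c2 c3
  · have := le_gain_same_lt m ℓ hm t d e c1
    omega
  · omega
  · have := le_gain_same_gt m ℓ t d e (by omega)
    omega
  · have := le_gain_same_gt m ℓ t d e (by omega)
    omega

theorem lev_sum (ℓ k e : ℕ) (he : e < ℓ) (N : ℕ) :
    (if min N k ≤ e then (ℓ : ℤ) else (((min N k + 1) % 2 : ℕ) : ℤ)) ≤
      ℓ + ∑ d ∈ Finset.range N, (if d + 1 ≤ k then lev ℓ e d else 0) := by
  induction N with
  | zero => simp
  | succ N ih =>
    rw [Finset.sum_range_succ, ← add_assoc]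
    unfold lev at ih ⊢
    generalize (ℓ : ℤ) + ∑ d ∈ Finset.range N, _ = S at ih ⊢
    split_ifs at ih ⊢ <;> omega

theorem Gain_pure (m ℓ k : ℕ) (v : SpiderVert m ℓ) :
    Gain (Spider m ℓ) (CS m ℓ k) (pureStrat v) = (1 / ((m : ℝ) * k + 1)) *
      (((gain (Spider m ℓ) none v : ℤ) + ∑ d : Fin ℓ, if d.val + 1 ≤ k then
        ∑ s : Fin m, (gain (Spider m ℓ) (some (s, d)) v : ℤ) else 0 : ℤ) : ℝ) := by
  have h : Gain (Spider m ℓ) (CS m ℓ k) (pureStrat v) =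
      ∑ x, CS m ℓ k x * (gain (Spider m ℓ) x v : ℝ) := by
    unfold Gain pureStrat
    refine Finset.sum_congr rfl fun x _ => ?_
    simp
  rw [h, Fintype.sum_option, Fintype.sum_prod_type, Finset.sum_comm]
  push_cast
  rw [mul_add, Finset.mul_sum]
  congr 1
  refine Finset.sum_congr rfl fun d _ => ?_
  by_cases hd : d.val + 1 ≤ k
  · simp [CS, hd, Finset.mul_sum]
  · simp [CS, hd]

theorem Gain_min (m ℓ k : ℕ) (hm : 3 ≤ m) (v : SpiderVert m ℓ) :
    Gain (Spider m ℓ) (CS m ℓ k) (pureStrat (none : SpiderVert m ℓ)) ≤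
      Gain (Spider m ℓ) (CS m ℓ k) (pureStrat v) := by
  rcases v with _ | ⟨t, e⟩
  · exact le_rfl
  rw [Gain_pure, Gain_pure]
  apply mul_le_mul_of_nonneg_left _ (by positivity)
  rw [Int.cast_le, gain_body_body]
  have h1 := le_gain_body m ℓ hm t e
  have h2 := lev_sum ℓ k e.val e.2 ℓ
  have h0 : (0 : ℤ) ≤ if min ℓ k ≤ e.val then (ℓ : ℤ) else (((min ℓ k + 1) % 2 : ℕ) : ℤ) := by
    split_ifs <;> positivity
  rw [← Fin.sum_univ_eq_sum_range (fun d => if d + 1 ≤ k then lev ℓ e.val d else 0)] at h2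
  have h3 : ∑ d : Fin ℓ, (if d.val + 1 ≤ k then lev ℓ e.val d.val else 0) ≤
      (∑ d : Fin ℓ, if d.val + 1 ≤ k then
        ∑ s : Fin m, (gain (Spider m ℓ) (some (s, d)) (some (t, e)) : ℤ) else 0) -
      (∑ d : Fin ℓ, if d.val + 1 ≤ k then
        ∑ s : Fin m, (gain (Spider m ℓ) (some (s, d)) none : ℤ) else 0) := by
    rw [← Finset.sum_sub_distrib]
    refine Finset.sum_le_sum fun d _ => ?_
    split_ifs
    · rw [← Finset.sum_sub_distrib]
      exact level_bound m ℓ hm t d e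
    · simp
  push_cast
  have h1' : (ℓ : ℤ) ≤ (gain (Spider m ℓ) none (some (t, e)) : ℤ) := by exact_mod_cast h1
  linarith

/-- On the spider `S(m,ℓ)` with body `b`, for `0 ≤ k ≤ ℓ`, the gain of `C_S(k)` against
any pure strategy is at least its gain against `Z(b)`; consequently the guaranteed gain
`GGain(S, C_S(k)) = min_y Gain(S, C_S(k), Z(y))` equals `Gain(S, C_S(k), Z(b))`. -/
theorem stmt_6 (m ℓ k : ℕ) (hm : 3 ≤ m) (hℓ : 1 ≤ ℓ) (hk : k ≤ ℓ) :
    (∀ v : SpiderVert m ℓ,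
      Gain (Spider m ℓ) (CS m ℓ k) (pureStrat (none : SpiderVert m ℓ)) ≤
        Gain (Spider m ℓ) (CS m ℓ k) (pureStrat v)) ∧
    Finset.univ.inf' Finset.univ_nonempty
        (fun y : SpiderVert m ℓ => Gain (Spider m ℓ) (CS m ℓ k) (pureStrat y)) =
      Gain (Spider m ℓ) (CS m ℓ k) (pureStrat (none : SpiderVert m ℓ)) := by
  have key := Gain_min m ℓ k hm
  refine ⟨key, le_antisymm ?_ ?_⟩
  · exact Finset.inf'_le _ (Finset.mem_univ _)
  · exact Finset.le_inf' _ _ fun y _ => key y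
end

section
/- For every integer m ≥ 3 there exists a constant C ≥ 0 such that for all integers ℓ ≥ 1, taking k = ⌈2√ℓ/√m⌉ (truncated to ℓ if necessary), the guaranteed gain of Player 1 with the strategy C_S(k) on the spider S(m,ℓ) satisfies GGain(S, C_S(k)) ≥ ℓ − √ℓ/√m − C. -/
/-- Distance from the body. -/
def spH {m ℓ : ℕ} : SpiderVert m ℓ → ℕ
  | none => 0
  | some (_, d) => d.val + 1

/-- Explicit distance in the spider. -/
def spD {m ℓ : ℕ} : SpiderVert m ℓ → SpiderVert m ℓ → ℕ
  | none, v => spH v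
  | some (_, d), none => d.val + 1
  | some (p, d), some (q, e) =>
      if p = q then (d.val - e.val) + (e.val - d.val) else d.val + 1 + (e.val + 1)

lemma spD_step {m ℓ : ℕ} (u w v : SpiderVert m ℓ) (h : (Spider m ℓ).Adj u w) :
    spD u v ≤ spD w v + 1 := by
  rw [Spider, SimpleGraph.fromRel_adj] at h
  obtain ⟨-, h⟩ := h
  rcases u with _ | ⟨p, d⟩ <;> rcases w with _ | ⟨q, e⟩ <;> rcases v with _ | ⟨r, f⟩ <;>
    simp only [spiderRel, spD, spH, or_false, false_or] at h ⊢ <;> first | omega | skip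
  · split_ifs <;> omega
  · split_ifs <;> omega
  · rcases h with ⟨rfl, h⟩ | ⟨rfl, h⟩ <;> split_ifs <;> omega

lemma spD_le_length {m ℓ : ℕ} {u v : SpiderVert m ℓ} (W : (Spider m ℓ).Walk u v) :
    spD u v ≤ W.length := by
  induction W with
  | nil =>
    rename_i u
    rcases u with _ | ⟨p, d⟩ <;> simp [spD, spH]
  | cons h W ih =>
    have := spD_step _ _ (by assumption) h
    rw [SimpleGraph.Walk.length_cons]
    exact (spD_step _ _ _ h).trans (by omega)

lemma spD_zero {m ℓ : ℕ} {u v : SpiderVert m ℓ} (h : spD u v = 0) : u = v := by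
  rcases u with _ | ⟨p, d⟩ <;> rcases v with _ | ⟨q, e⟩ <;> simp [spD, spH] at h ⊢
  split_ifs at h with hp
  exact ⟨hp, Fin.ext (by omega)⟩

lemma spD_next {m ℓ : ℕ} {u v : SpiderVert m ℓ} {n : ℕ} (h : spD u v = n + 1) :
    ∃ w, (Spider m ℓ).Adj u w ∧ spD w v = n := by
  have down : ∀ (p : Fin m) (d : Fin ℓ), ∃ w : SpiderVert m ℓ,
      (Spider m ℓ).Adj (some (p, d)) w ∧
        ((d.val = 0 ∧ w = none) ∨ ∃ e : Fin ℓ, e.val + 1 = d.val ∧ w = some (p, e)) := by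
    intro p d
    by_cases hd : d.val = 0
    · exact ⟨none, by simp [Spider, SimpleGraph.fromRel_adj, spiderRel, hd], Or.inl ⟨hd, rfl⟩⟩
    · refine ⟨some (p, ⟨d.val - 1, by omega⟩), ?_, Or.inr ⟨_, ?_, rfl⟩⟩
      · simp [Spider, SimpleGraph.fromRel_adj, spiderRel, Fin.ext_iff]; omega
      · simp; omega
  rcases u with _ | ⟨p, d⟩ <;> rcases v with _ | ⟨q, e⟩
  · simp [spD, spH] at h
  · simp only [spD, spH] at h
    refine ⟨some (q, ⟨0, by omega⟩), ?_, ?_⟩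
    · simp [Spider, SimpleGraph.fromRel_adj, spiderRel]
    · simp [spD]; omega
  · obtain ⟨w, hw, ⟨h0, rfl⟩ | ⟨f, hf, rfl⟩⟩ := down p d <;> refine ⟨_, hw, ?_⟩ <;>
      simp only [spD, spH] at h ⊢ <;> omega
  · by_cases hc : p = q ∧ d.val < e.val
    · obtain ⟨rfl, hc⟩ := hc
      refine ⟨some (p, ⟨d.val + 1, by omega⟩), ?_, ?_⟩
      · simp [Spider, SimpleGraph.fromRel_adj, spiderRel, Fin.ext_iff]
      · simp [spD] at h ⊢; omega
    · obtain ⟨w, hw, ⟨h0, rfl⟩ | ⟨f, hf, rfl⟩⟩ := down p d <;> refine ⟨_, hw, ?_⟩ <;>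
      simp only [spD, spH] at h ⊢ <;> split_ifs at h ⊢ <;> first | omega | (exfalso; apply hc; refine ⟨by assumption, by omega⟩)

lemma exists_walk {m ℓ : ℕ} (n : ℕ) : ∀ (u v : SpiderVert m ℓ), spD u v = n →
    ∃ W : (Spider m ℓ).Walk u v, W.length = n := by
  induction n with
  | zero =>
    intro u v h
    obtain rfl := spD_zero h
    exact ⟨.nil, rfl⟩
  | succ n ih =>
    intro u v h
    obtain ⟨w, hw, h'⟩ := spD_next h
    obtain ⟨W, hW⟩ := ih w v h'
    exact ⟨.cons hw W, by simp [hW]⟩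

lemma spider_dist_s10 {m ℓ : ℕ} (u v : SpiderVert m ℓ) : (Spider m ℓ).dist u v = spD u v := by
  obtain ⟨W, hW⟩ := exists_walk _ u v rfl
  apply le_antisymm
  · rw [← hW]; exact SimpleGraph.dist_le W
  · obtain ⟨W', hW'⟩ := (SimpleGraph.Walk.reachable W).exists_walk_length_eq_dist
    rw [← hW']; exact spD_le_length W'

lemma gain_leg {m ℓ : ℕ} (x y : SpiderVert m ℓ) (p : Fin m) (c : ℕ)
    (h : ∀ d : Fin ℓ, c < 2 * (d.val + 1) → spD (some (p, d)) x < spD (some (p, d)) y) :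
    (ℓ : ℝ) - c / 2 ≤ (gain (Spider m ℓ) x y : ℝ) := by
  have key : ℓ - c / 2 ≤ gain (Spider m ℓ) x y := by
    unfold gain
    have hinj : Function.Injective (fun d : Fin ℓ => (some (p, d) : SpiderVert m ℓ)) := by
      intro a b hab; simpa using hab
    have h1 : ((fun d : Fin ℓ => (some (p, d) : SpiderVert m ℓ)) '' {d | c / 2 ≤ d.val}) ⊆
        {u | (Spider m ℓ).dist u x < (Spider m ℓ).dist u y} := by
      rintro _ ⟨d, hd, rfl⟩
      simp only [Set.mem_setOf_eq, spider_dist_s10] at hd ⊢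
      exact h d (by omega)
    have h2 := Set.ncard_le_ncard h1 (Set.toFinite _)
    rw [Set.ncard_image_of_injective _ hinj] at h2
    refine le_trans ?_ h2
    have h3 : Function.Injective (fun i : Fin (ℓ - c/2) => (⟨i.val + c/2, by omega⟩ : Fin ℓ)) := by
      intro a b hab
      simp only [Fin.mk.injEq] at hab
      exact Fin.ext (by omega)
    have h4 : Set.range (fun i : Fin (ℓ - c/2) => (⟨i.val + c/2, by omega⟩ : Fin ℓ)) ⊆
        {d | c / 2 ≤ d.val} := by
      rintro _ ⟨i, rfl⟩
      simp
    have h5 := Set.ncard_le_ncard h4 (Set.toFinite _)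
    rw [← Set.image_univ, Set.ncard_image_of_injective _ h3] at h5
    simpa using h5
  have : 2 * ℓ ≤ 2 * gain (Spider m ℓ) x y + c := by omega
  have : (2 * ℓ : ℝ) ≤ 2 * gain (Spider m ℓ) x y + c := by exact_mod_cast this
  linarith

lemma gain_big {m ℓ : ℕ} (hm : 3 ≤ m) (x y : SpiderVert m ℓ) (q : Fin m)
    (h : ∀ (p : Fin m) (d : Fin ℓ), p ≠ q → spD (some (p, d)) x < spD (some (p, d)) y) :
    2 * (ℓ : ℝ) ≤ (gain (Spider m ℓ) x y : ℝ) := by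
  have key : (m - 1) * ℓ ≤ gain (Spider m ℓ) x y := by
    unfold gain
    have h1 : (some '' (({q}ᶜ : Set (Fin m)) ×ˢ (Set.univ : Set (Fin ℓ)))) ⊆
        {u | (Spider m ℓ).dist u x < (Spider m ℓ).dist u y} := by
      rintro _ ⟨⟨p, d⟩, hd, rfl⟩
      simp only [Set.mem_setOf_eq, spider_dist_s10] at hd ⊢
      exact h p d (by simpa using hd)
    have h2 := Set.ncard_le_ncard h1 (Set.toFinite _)
    rw [Set.ncard_image_of_injective _ (Option.some_injective _), Set.ncard_prod,
      Set.ncard_compl] at h2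
    simpa using h2
  have : 2 * ℓ ≤ gain (Spider m ℓ) x y := le_trans (Nat.mul_le_mul_right _ (by omega)) key
  exact_mod_cast this

/-- Correction term on the leg of the opponent. -/
noncomputable def spE (ℓ j : ℕ) (d : ℕ) : ℝ :=
  if d + 1 < j then (ℓ : ℝ) else if d + 1 = j then -(ℓ : ℝ) else -(j : ℝ) / 2

lemma gain_none {m ℓ : ℕ} (p : Fin m) (d : Fin ℓ) :
    (ℓ : ℝ) - ((d.val : ℝ) + 1) / 2 ≤ (gain (Spider m ℓ) (some (p, d)) none : ℝ) := by
  have := gain_leg (some (p, d)) none p (d.val + 1) (by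
    intro e he
    simp only [spD, if_true]; omega)
  push_cast at this
  exact this

lemma gain_some {m ℓ : ℕ} (hm : 3 ≤ m) (p q : Fin m) (d e : Fin ℓ) :
    (ℓ : ℝ) - ((d.val : ℝ) + 1) / 2 + (if p = q then spE ℓ (e.val + 1) d.val else 0) ≤
      (gain (Spider m ℓ) (some (p, d)) (some (q, e)) : ℝ) := by
  split_ifs with hpq
  · subst hpq
    unfold spE
    split_ifs with h1 h2
    · have := gain_big hm (some (p, d)) (some (p, e)) p (by
        intro r f hr
        simp only [spD, if_neg hr]; omega)
      have h3 : (0 : ℝ) ≤ d.val := Nat.cast_nonneg _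
      linarith
    · have h3 : (0 : ℝ) ≤ d.val := Nat.cast_nonneg _
      have h4 : (0 : ℝ) ≤ gain (Spider m ℓ) (some (p, d)) (some (p, e)) := Nat.cast_nonneg _
      linarith
    · have := gain_leg (some (p, d)) (some (p, e)) p (d.val + 1 + (e.val + 1)) (by
        intro f hf
        simp only [spD, if_true]; omega)
      push_cast at this ⊢
      linarith
  · have := gain_leg (some (p, d)) (some (q, e)) p (d.val + 1) (by
        intro f hf
        simp only [spD, if_true, if_neg hpq]; omega)
    push_cast at this
    linarith

lemma gain_body {m ℓ : ℕ} (hm : 3 ≤ m) (q : Fin m) (e : Fin ℓ) :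
    2 * (ℓ : ℝ) ≤ (gain (Spider m ℓ) none (some (q, e)) : ℝ) :=
  gain_big hm _ _ q (by
    intro r f hr
    simp only [spD, if_neg hr]; omega)

lemma sum_spE (ℓ j : ℕ) (hj : 1 ≤ j) (k : ℕ) :
    (k < j → ∑ d ∈ Finset.range k, spE ℓ j d = ℓ * k) ∧
    (j ≤ k → ∑ d ∈ Finset.range k, spE ℓ j d = ℓ * (j - 2) - j * (k - j) / 2) := by
  induction k with
  | zero => exact ⟨by simp, by omega⟩
  | succ k ih =>
    rw [Finset.sum_range_succ]
    refine ⟨fun h => ?_, fun h => ?_⟩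
    · rw [ih.1 (by omega), spE, if_pos h]; push_cast; ring
    · rcases Nat.lt_or_ge k j with h' | h'
      · have : k + 1 = j := by omega
        rw [ih.1 h', spE, if_neg (by omega), if_pos this, ← this]; push_cast; ring
      · rw [ih.2 h', spE, if_neg (by omega), if_neg (by omega)]; push_cast; ring

lemma sum_spE_ge (ℓ j k : ℕ) (hj : 1 ≤ j) (hk : k ≤ ℓ) :
    0 ≤ 2 * (ℓ : ℝ) + ∑ d ∈ Finset.range k, spE ℓ j d := by
  rcases Nat.lt_or_ge k j with h | h
  · rw [(sum_spE ℓ j hj k).1 h]; positivity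
  · rw [(sum_spE ℓ j hj k).2 h]
    have h1 : (k : ℝ) ≤ ℓ := by exact_mod_cast hk
    have h2 : (0 : ℝ) ≤ j := Nat.cast_nonneg _
    have h3 : (0 : ℝ) ≤ k := Nat.cast_nonneg _
    nlinarith [mul_nonneg h2 (sub_nonneg.2 h1), mul_nonneg h2 h3, mul_nonneg h2 h2]

lemma sum_fin_cut (ℓ k : ℕ) (hk : k ≤ ℓ) (F : ℕ → ℝ) :
    ∑ d : Fin ℓ, (if d.val + 1 ≤ k then F d.val else 0) = ∑ d ∈ Finset.range k, F d := by
  rw [Fin.sum_univ_eq_sum_range (fun d => if d + 1 ≤ k then F d else 0) ℓ, ← Finset.sum_filter]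
  congr 1
  ext d
  simp; omega

lemma sum_base (ℓ k : ℕ) :
    ∑ d ∈ Finset.range k, ((ℓ : ℝ) - ((d : ℝ) + 1) / 2) = k * ℓ - k * (k + 1) / 4 := by
  induction k with
  | zero => simp
  | succ k ih => rw [Finset.sum_range_succ, ih]; push_cast; ring

lemma Gain_eq (m ℓ k : ℕ) (y : SpiderVert m ℓ) :
    Gain (Spider m ℓ) (CS m ℓ k) (pureStrat y) = 1 / ((m : ℝ) * k + 1) *
      ((gain (Spider m ℓ) none y : ℝ) + ∑ p : Fin m, ∑ d : Fin ℓ,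
        if d.val + 1 ≤ k then (gain (Spider m ℓ) (some (p, d)) y : ℝ) else 0) := by
  have : ∀ x, ∑ z, CS m ℓ k x * pureStrat y z * (gain (Spider m ℓ) x z : ℝ)
      = CS m ℓ k x * gain (Spider m ℓ) x y := by
    intro x
    rw [Finset.sum_eq_single y]
    · simp [pureStrat]
    · intro b _ hb; simp [pureStrat, hb]
    · simp
  unfold Gain
  rw [Finset.sum_congr rfl (fun x _ => this x), Fintype.sum_option, Fintype.sum_prod_type,
    mul_add, Finset.mul_sum]
  congr 1
  refine Finset.sum_congr rfl fun p _ => ?_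
  rw [Finset.mul_sum]
  refine Finset.sum_congr rfl fun d _ => ?_
  simp only [CS]
  split_ifs <;> simp

lemma total_ge (m ℓ k : ℕ) (hm : 3 ≤ m) (hk : k ≤ ℓ) (y : SpiderVert m ℓ) :
    (m : ℝ) * (k * ℓ - k * (k + 1) / 4) ≤
      (gain (Spider m ℓ) none y : ℝ) + ∑ p : Fin m, ∑ d : Fin ℓ,
        if d.val + 1 ≤ k then (gain (Spider m ℓ) (some (p, d)) y : ℝ) else 0 := by
  rcases y with _ | ⟨q, e⟩
  · have h0 : (0 : ℝ) ≤ gain (Spider m ℓ) none none := Nat.cast_nonneg _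
    have h1 : ∑ p : Fin m, ∑ d : Fin ℓ,
        (if d.val + 1 ≤ k then ((ℓ : ℝ) - ((d.val : ℝ) + 1) / 2) else 0) ≤
        ∑ p : Fin m, ∑ d : Fin ℓ,
        if d.val + 1 ≤ k then (gain (Spider m ℓ) (some (p, d)) none : ℝ) else 0 := by
      gcongr with p _ d _
      split_ifs
      · exact gain_none p d
      · exact le_rfl
    simp only [sum_fin_cut ℓ k hk (fun d => (ℓ : ℝ) - ((d : ℝ) + 1) / 2), sum_base] at h1
    simp only [Finset.sum_const, Finset.card_univ, Fintype.card_fin, nsmul_eq_mul] at h1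
    linarith
  · have h0 := gain_body hm q e
    have h1 : ∑ p : Fin m, ∑ d : Fin ℓ,
        (if d.val + 1 ≤ k then ((ℓ : ℝ) - ((d.val : ℝ) + 1) / 2 +
          (if p = q then spE ℓ (e.val + 1) d.val else 0)) else 0) ≤
        ∑ p : Fin m, ∑ d : Fin ℓ,
        if d.val + 1 ≤ k then (gain (Spider m ℓ) (some (p, d)) (some (q, e)) : ℝ) else 0 := by
      gcongr with p _ d _
      split_ifs with h2 h3
      · have := gain_some hm p q d e
        rwa [if_pos h3] at this
      · have := gain_some hm p q d e
        rwa [if_neg h3] at this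
      · exact le_rfl
    have h2 : ∀ p : Fin m, ∑ d : Fin ℓ,
        (if d.val + 1 ≤ k then ((ℓ : ℝ) - ((d.val : ℝ) + 1) / 2 +
          (if p = q then spE ℓ (e.val + 1) d.val else 0)) else 0) =
        (k * ℓ - k * (k + 1) / 4) +
          if p = q then ∑ d ∈ Finset.range k, spE ℓ (e.val + 1) d else 0 := by
      intro p
      rw [sum_fin_cut ℓ k hk (fun d => (ℓ : ℝ) - ((d : ℝ) + 1) / 2 +
          (if p = q then spE ℓ (e.val + 1) d else 0)), Finset.sum_add_distrib, sum_base]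
      split_ifs <;> simp
    rw [Finset.sum_congr rfl (fun p _ => h2 p), Finset.sum_add_distrib,
      Finset.sum_ite_eq' Finset.univ q, if_pos (Finset.mem_univ _)] at h1
    simp only [Finset.sum_const, Finset.card_univ, Fintype.card_fin, nsmul_eq_mul] at h1
    have h3 := sum_spE_ge ℓ (e.val + 1) k (by omega) hk
    linarith

/-- For every `m ≥ 3` there is a constant `C ≥ 0` such that for all `ℓ ≥ 1`, taking
`k = ⌈2√ℓ/√m⌉` (truncated to `ℓ` if necessary), the guaranteed gain
`GGain(S, C_S(k)) = min_y Gain(S, C_S(k), Z(y))` on the spider `S(m,ℓ)` is at least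
`ℓ - √ℓ/√m - C`. -/
theorem stmt_10 (m : ℕ) (hm : 3 ≤ m) :
    ∃ C : ℝ, 0 ≤ C ∧ ∀ ℓ : ℕ, 1 ≤ ℓ →
      (ℓ : ℝ) - Real.sqrt ℓ / Real.sqrt m - C ≤
        Finset.univ.inf' Finset.univ_nonempty
          (fun y : SpiderVert m ℓ =>
            Gain (Spider m ℓ)
              (CS m ℓ (min (⌈2 * Real.sqrt ℓ / Real.sqrt m⌉₊) ℓ)) (pureStrat y)) := by
  refine ⟨2, by norm_num, fun ℓ hℓ => ?_⟩
  refine Finset.le_inf' _ _ fun y _ => ?_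
  rw [mul_div_assoc]
  set s : ℝ := Real.sqrt ℓ / Real.sqrt m with hs
  have hs0 : 0 ≤ s := by positivity
  have hm0 : (0 : ℝ) < m := by exact_mod_cast (by omega : 0 < m)
  have hm1 : (1 : ℝ) ≤ m := by exact_mod_cast (by omega : 1 ≤ m)
  have hℓs : (ℓ : ℝ) = m * s ^ 2 := by
    rw [hs, div_pow, Real.sq_sqrt (Nat.cast_nonneg _), Real.sq_sqrt hm0.le]
    field_simp
  set k := min ⌈2 * s⌉₊ ℓ with hk
  have hkℓ : k ≤ ℓ := min_le_right _ _
  have hk1 : (k : ℝ) ≤ 2 * s + 1 := by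
    have h1 : (k : ℝ) ≤ (⌈2 * s⌉₊ : ℝ) := by exact_mod_cast min_le_left _ _
    have h2 := Nat.ceil_lt_add_one (a := 2 * s) (by positivity)
    linarith
  have hk2 : 2 * s ≤ k ∨ k = ℓ := by
    rcases le_total ⌈2 * s⌉₊ ℓ with h | h
    · left; rw [hk, min_eq_left h]; exact Nat.le_ceil _
    · right; rw [hk, min_eq_right h]
  clear_value k s
  have hT := total_ge m ℓ k hm hkℓ y
  have hk0 : (0 : ℝ) ≤ k := Nat.cast_nonneg _
  have hmk : (0 : ℝ) ≤ m * k := by positivity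
  rw [Gain_eq, one_div, inv_mul_eq_div, le_div_iff₀ (by positivity)]
  refine le_trans ?_ hT
  have h1 : (m * k : ℝ) * (k + 1) / 4 ≤ m * k * (s / 2 + 1 / 2) := by
    have := mul_le_mul_of_nonneg_left hk1 hmk
    nlinarith
  have h2 : (ℓ : ℝ) ≤ m * k * (s / 2) + m * k := by
    rcases hk2 with h | h
    · have := mul_le_mul_of_nonneg_left h (mul_nonneg hm0.le hs0)
      nlinarith
    · rw [← h]
      nlinarith [mul_nonneg hmk hs0]
  nlinarith [mul_nonneg hmk hs0]
end

section
/- Let m ≥ 2 and h ≥ 1, and let T(m,h) be the complete m-ary tree of height h with n = (m^{h+1}−1)/(m−1) vertices. Then the safety value of Player 1 in the two-player competitive diffusion game on T(m,h) equals (n−1)((m−1)n+1)/(n(m²−m+1)+m−1). -/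
/-- Vertices of the complete `m`-ary tree of height `h`: lists over `Fin m` of length
at most `h`; the length of the list is the depth of the vertex. -/
def TreeVert (m h : ℕ) := {l : List (Fin m) // l.length ≤ h}

noncomputable instance (m h : ℕ) : Fintype (TreeVert m h) :=
  (List.finite_length_le (Fin m) h).fintype

instance (m h : ℕ) : DecidableEq (TreeVert m h) := Subtype.instDecidableEq

instance (m h : ℕ) : Nonempty (TreeVert m h) := ⟨⟨[], by simp⟩⟩

/-- The complete `m`-ary tree of height `h`: each vertex of depth `< h` has exactly
`m` children, obtained by prepending an element of `Fin m`. -/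
def CompleteTree (m h : ℕ) : SimpleGraph (TreeVert m h) :=
  SimpleGraph.fromRel (fun x y => x.1 = y.1.tail ∧ y.1.length = x.1.length + 1)

/-- The root of the complete `m`-ary tree. -/
def root (m h : ℕ) : TreeVert m h := ⟨[], by simp⟩

noncomputable def alpha1 (m h : ℕ) : ℝ :=
  ((m : ℝ) ^ h - 1) / ((m : ℝ) ^ (h + 2) - (m : ℝ) ^ (h + 1) + (m : ℝ) ^ h - 1)

noncomputable def beta1 (m h : ℕ) : ℝ :=
  ((m : ℝ) - 1) * (m : ℝ) ^ h / ((m : ℝ) ^ (h + 2) - (m : ℝ) ^ (h + 1) + (m : ℝ) ^ h - 1)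

noncomputable def alpha2 (m h : ℕ) : ℝ :=
  ((m : ℝ) - 1) * ((m : ℝ) ^ (h + 1) - (m : ℝ) ^ h + 1) /
    ((m : ℝ) ^ (h + 2) - (m : ℝ) ^ (h + 1) + (m : ℝ) ^ h - 1)

noncomputable def beta2 (m h : ℕ) : ℝ :=
  ((m : ℝ) ^ h - 1) / ((m : ℝ) ^ (h + 2) - (m : ℝ) ^ (h + 1) + (m : ℝ) ^ h - 1)

/-- The mixed strategy `μ₁`: probability `α₁` on the root, `β₁` on each depth-1 vertex. -/
noncomputable def mu1 (m h : ℕ) : TreeVert m h → ℝ := fun v =>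
  if v.1.length = 0 then alpha1 m h else if v.1.length = 1 then beta1 m h else 0

/-- The mixed strategy `μ₂`: probability `α₂` on the root, `β₂` on each depth-1 vertex. -/
noncomputable def mu2 (m h : ℕ) : TreeVert m h → ℝ := fun v =>
  if v.1.length = 0 then alpha2 m h else if v.1.length = 1 then beta2 m h else 0
/-- The safety value of Player 1: the maximum over mixed strategies `X` of the minimum
over vertices `y` of `Gain(G, X, Z(y))`. -/
noncomputable def safetyValue {V : Type*} (G : SimpleGraph V) [Fintype V] [DecidableEq V]
    [Nonempty V] : ℝ :=
  ⨆ X : {X : V → ℝ // (∀ v, 0 ≤ X v) ∧ ∑ v, X v = 1},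
    Finset.univ.inf' Finset.univ_nonempty (fun y : V => Gain G X.1 (pureStrat y))

namespace CTProof

variable {m h : ℕ}

abbrev Sub (w : List (Fin m)) : Set (TreeVert m h) := {u | w <:+ u.1}

/-- depth one vertices -/
def ch (m k : ℕ) (c : Fin m) : TreeVert m (k+1) := ⟨[c], by simp⟩

lemma adj_iff (x y : TreeVert m h) : (CompleteTree m h).Adj x y ↔
    (∃ a, y.1 = a :: x.1) ∨ (∃ a, x.1 = a :: y.1) := by
  have key : ∀ x y : TreeVert m h, (x.1 = y.1.tail ∧ y.1.length = x.1.length + 1) ↔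
      ∃ a, y.1 = a :: x.1 := by
    rintro ⟨x, hx⟩ ⟨y, hy⟩
    cases y with
    | nil => simp
    | cons b y =>
      simp only [List.tail_cons, List.length_cons]
      constructor
      · rintro ⟨rfl, _⟩; exact ⟨b, rfl⟩
      · rintro ⟨a, ha⟩
        simp at ha
        simp [ha.2]
  unfold CompleteTree
  rw [SimpleGraph.fromRel_adj, key, key]
  constructor
  · exact fun h => h.2
  · intro h
    refine ⟨?_, h⟩
    rintro rfl
    rcases h with ⟨a, h⟩ | ⟨a, h⟩ <;> simpa using congrArg List.length h

lemma conn (m h : ℕ) : (CompleteTree m h).Connected := by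
  have key : ∀ (l : List (Fin m)) (hl : l.length ≤ h),
      (CompleteTree m h).Reachable ⟨l, hl⟩ (root m h) := by
    intro l
    induction l with
    | nil => intro hl; exact SimpleGraph.Reachable.refl _
    | cons a l ih =>
      intro hl
      have hl' : l.length ≤ h := by simp at hl; omega
      refine SimpleGraph.Reachable.trans (SimpleGraph.Adj.reachable ?_) (ih hl')
      exact (adj_iff _ _).2 (Or.inr ⟨a, rfl⟩)
  refine ⟨?_⟩
  intro x y
  exact (key x.1 x.2).trans (key y.1 y.2).symm

lemma cut_le (a : Fin m) (w p : TreeVert m h) (hw : w.1 = a :: p.1) {u v : TreeVert m h}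
    (W : (CompleteTree m h).Walk u v) (hu : w.1 <:+ u.1) (hv : ¬ w.1 <:+ v.1) :
    (CompleteTree m h).dist u w + 1 + (CompleteTree m h).dist p v ≤ W.length := by
  induction W with
  | nil => exact absurd hu hv
  | @cons u u' v hadj W ih =>
    rw [SimpleGraph.Walk.length_cons]
    by_cases hu' : w.1 <:+ u'.1
    · have h1 := ih hu' hv
      have h2 := (conn m h).dist_triangle (u := u) (v := u') (w := w)
      rw [SimpleGraph.dist_eq_one_iff_adj.2 hadj] at h2
      omega
    · have : u = w ∧ u' = p := by
        rw [adj_iff] at hadj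
        rcases hadj with ⟨b, hb⟩ | ⟨b, hb⟩
        · exfalso; apply hu'; rw [hb]; exact hu.trans (List.suffix_cons _ _)
        · rw [hb, List.suffix_cons_iff] at hu
          rcases hu with hu | hu
          · refine ⟨Subtype.ext (by rw [hb, hu]), Subtype.ext ?_⟩
            rw [hw] at hu
            simp at hu
            exact hu.2.symm
          · exact absurd hu hu'
      obtain ⟨rfl, rfl⟩ := this
      have := SimpleGraph.dist_le W
      simp
      omega

lemma cut (a : Fin m) (w p : TreeVert m h) (hw : w.1 = a :: p.1) {u v : TreeVert m h}
    (hu : w.1 <:+ u.1) (hv : ¬ w.1 <:+ v.1) :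
    (CompleteTree m h).dist u w + 1 + (CompleteTree m h).dist p v ≤
      (CompleteTree m h).dist u v := by
  obtain ⟨W, hW⟩ := (conn m h).exists_walk_length_eq_dist u v
  rw [← hW]
  exact cut_le a w p hw W hu hv

lemma adj_tri (a : Fin m) (w p : TreeVert m h) (hw : w.1 = a :: p.1) (u : TreeVert m h) :
    (CompleteTree m h).dist u w ≤ (CompleteTree m h).dist p u + 1 ∧
    (CompleteTree m h).dist u p ≤ (CompleteTree m h).dist u w + 1 := by
  have hadj : (CompleteTree m h).Adj p w := by rw [adj_iff]; exact Or.inl ⟨a, hw⟩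
  have h2 := (conn m h).dist_triangle (u := u) (v := p) (w := w)
  have h3 := (conn m h).dist_triangle (u := u) (v := w) (w := p)
  rw [SimpleGraph.dist_eq_one_iff_adj.2 hadj] at h2
  rw [SimpleGraph.dist_eq_one_iff_adj.2 hadj.symm] at h3
  rw [SimpleGraph.dist_comm (u := p) (v := u)]
  exact ⟨h2, h3⟩

lemma card_succ (m k : ℕ) :
    Fintype.card (TreeVert m (k+1)) = 1 + m * Fintype.card (TreeVert m k) := by
  let e : TreeVert m (k+1) ≃ Option (Fin m × TreeVert m k) :=
    { toFun := fun x => match x with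
        | ⟨[], _⟩ => none
        | ⟨a :: l, hl⟩ => some (a, ⟨l, by simpa using hl⟩)
      invFun := fun y => match y with
        | none => ⟨[], by simp⟩
        | some (a, l) => ⟨a :: l.1, by simpa using l.2⟩
      left_inv := by rintro ⟨_ | ⟨a, l⟩, hl⟩ <;> rfl
      right_inv := by rintro (_ | ⟨a, l⟩) <;> rfl }
  rw [Fintype.card_congr e]
  simp [add_comm]

lemma card_zero (m : ℕ) : Fintype.card (TreeVert m 0) = 1 := by
  rw [Fintype.card_eq_one_iff]
  refine ⟨root m 0, ?_⟩
  rintro ⟨l, hl⟩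
  apply Subtype.ext
  simpa [root] using hl

lemma card_eq (m : ℕ) (k : ℕ) :
    ((m : ℝ) - 1) * (Fintype.card (TreeVert m k) : ℝ) = (m : ℝ)^(k+1) - 1 := by
  induction k with
  | zero => simp [card_zero]
  | succ k ih =>
    rw [card_succ]; push_cast
    linear_combination (m:ℝ) * ih

lemma card_sub (w : List (Fin m)) (j : ℕ) (hj : j + w.length = h) :
    (Sub w : Set (TreeVert m h)).ncard = Fintype.card (TreeVert m j) := by
  rw [← Nat.card_eq_fintype_card, ← Set.ncard_univ]
  symm
  apply Set.ncard_congr (fun (l : TreeVert m j) _ =>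
    (⟨l.1 ++ w, by have := l.2; simp; omega⟩ : TreeVert m h))
  · intro l _
    exact List.suffix_append _ _
  · intro a b _ _ hab
    apply Subtype.ext
    simpa using congrArg Subtype.val hab
  · rintro ⟨b, hb⟩ ⟨t, ht⟩
    simp only at ht
    subst ht
    exact ⟨⟨t, by simp at hb; omega⟩, trivial, rfl⟩

lemma ncard_compl_sub (k : ℕ) (c : Fin m) :
    ((Sub [c])ᶜ : Set (TreeVert m (k+1))).ncard + Fintype.card (TreeVert m k)
      = Fintype.card (TreeVert m (k+1)) := by
  rw [← card_sub (h := k+1) [c] k (by simp), add_comm, Set.ncard_add_ncard_compl,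
    Nat.card_eq_fintype_card]

lemma gain_le {G : SimpleGraph (TreeVert m h)} {x y} (S : Set (TreeVert m h))
    (H : ∀ u, u ∉ S → G.dist u y ≤ G.dist u x) : gain G x y ≤ S.ncard := by
  apply Set.ncard_le_ncard _ (Set.toFinite _)
  intro u hu
  by_contra hc
  exact absurd (H u hc) (not_le.2 hu)

lemma le_gain {G : SimpleGraph (TreeVert m h)} {x y} (S : Set (TreeVert m h))
    (H : ∀ u, u ∈ S → G.dist u x < G.dist u y) : S.ncard ≤ gain G x y :=
  Set.ncard_le_ncard H (Set.toFinite _)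

lemma gain_self {V : Type*} (G : SimpleGraph V) (x : V) : gain G x x = 0 := by
  simp [gain]

lemma cases_vert (k : ℕ) (y : TreeVert m (k+1)) : y = root m (k+1) ∨ ∃ c, [c] <:+ y.1 := by
  obtain ⟨l, hl⟩ := y
  rcases List.eq_nil_or_concat l with rfl | ⟨t, c, rfl⟩
  · left; rfl
  · right; exact ⟨c, by simp⟩

lemma cases_br (l : List (Fin m)) (c : Fin m) (hc : [c] <:+ l) :
    l = [c] ∨ ∃ b, [b, c] <:+ l := by
  obtain ⟨t, rfl⟩ := hc
  rcases List.eq_nil_or_concat t with rfl | ⟨t, b, rfl⟩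
  · left; rfl
  · right; exact ⟨b, t, by simp⟩

lemma br_unique {c c' : Fin m} {l : List (Fin m)} (h1 : [c] <:+ l) (h2 : [c'] <:+ l) : c = c' := by
  obtain ⟨t, rfl⟩ := h1
  obtain ⟨t', h⟩ := h2
  have := congrArg List.getLast? h
  simpa using this.symm

lemma root_lower (k : ℕ) (c : Fin m) (y : TreeVert m (k+1)) (hy : [c] <:+ y.1) :
    Fintype.card (TreeVert m (k+1)) ≤
      gain (CompleteTree m (k+1)) (root m (k+1)) y + Fintype.card (TreeVert m k) := by
  rw [← ncard_compl_sub k c]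
  gcongr
  apply le_gain
  intro u hu
  have := cut c (ch m k c) (root m (k+1)) rfl hy hu
  rw [SimpleGraph.dist_comm (v := root m (k+1)), SimpleGraph.dist_comm (v := y)]
  omega

lemma ch_lower (k : ℕ) (c : Fin m) (y : TreeVert m (k+1)) (hy : ¬ [c] <:+ y.1) :
    Fintype.card (TreeVert m k) ≤ gain (CompleteTree m (k+1)) (ch m k c) y := by
  rw [← card_sub (h := k+1) [c] k (by simp)]
  apply le_gain
  intro u hu
  have := cut c (ch m k c) (root m (k+1)) rfl hu hy
  omega

lemma root_upper (k : ℕ) (c : Fin m) :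
    gain (CompleteTree m (k+1)) (root m (k+1)) (ch m k c) + Fintype.card (TreeVert m k)
      ≤ Fintype.card (TreeVert m (k+1)) := by
  rw [← ncard_compl_sub k c]
  gcongr
  apply gain_le
  intro u hu
  have hu : [c] <:+ u.1 := by simpa using hu
  have := cut c (ch m k c) (root m (k+1)) rfl hu (v := root m (k+1)) (by simp [root, ch])
  omega

lemma br_root_upper (k : ℕ) (c : Fin m) (x : TreeVert m (k+1)) (hx : [c] <:+ x.1) :
    gain (CompleteTree m (k+1)) x (root m (k+1)) ≤ Fintype.card (TreeVert m k) := by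
  rw [← card_sub (h := k+1) [c] k (by simp)]
  apply gain_le
  intro u hu
  have := cut c (ch m k c) (root m (k+1)) rfl hx hu
  rw [SimpleGraph.dist_comm (v := root m (k+1)), SimpleGraph.dist_comm (v := x)]
  omega

lemma br_ch_upper (k : ℕ) (c c' : Fin m) (x : TreeVert m (k+1)) (hx : [c] <:+ x.1) :
    gain (CompleteTree m (k+1)) x (ch m k c') ≤ Fintype.card (TreeVert m k) := by
  rw [← card_sub (h := k+1) [c] k (by simp)]
  apply gain_le
  intro u hu
  have := cut c (ch m k c) (root m (k+1)) rfl hx hu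
  have := (adj_tri c' (ch m k c') (root m (k+1)) rfl u).1
  rw [SimpleGraph.dist_comm (v := x)]
  omega

lemma deep_upper (j : ℕ) (b c : Fin m) (x : TreeVert m (j+1+1)) (hx : [b, c] <:+ x.1) :
    gain (CompleteTree m (j+1+1)) x (root m (j+1+1)) ≤ Fintype.card (TreeVert m j) ∧
    gain (CompleteTree m (j+1+1)) x (ch m (j+1) c) ≤ Fintype.card (TreeVert m j) := by
  rw [← card_sub (h := j+1+1) [b, c] j (by simp)]
  constructor
  all_goals
    apply gain_le
    intro u hu
    have h1 := cut b (⟨[b, c], by simp⟩ : TreeVert m (j+1+1)) (ch m (j+1) c) rfl hx hu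
    have h2 := (adj_tri c (ch m (j+1) c) (root m (j+1+1)) rfl u).2
    rw [SimpleGraph.dist_comm (v := x)]
    rw [SimpleGraph.dist_comm (u := ch m (j+1) c) (v := u)] at h1
    omega

lemma br_pair (k : ℕ) (hm : 2 ≤ m) (c : Fin m) (x : TreeVert m (k+1)) (hx : [c] <:+ x.1)
    (Q : ℝ) (hQ : (Fintype.card (TreeVert m k) : ℝ) ≤ Q) :
    Q * gain (CompleteTree m (k+1)) x (root m (k+1)) +
      (Fintype.card (TreeVert m k) : ℝ) * gain (CompleteTree m (k+1)) x (ch m k c)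
      ≤ Q * Fintype.card (TreeVert m k) := by
  have hs : (0:ℝ) ≤ (Fintype.card (TreeVert m k) : ℝ) := Nat.cast_nonneg _
  have hQ0 := hs.trans hQ
  rcases cases_br x.1 c hx with hxc | ⟨b, hb⟩
  · have : x = ch m k c := Subtype.ext hxc
    have h1 : (gain (CompleteTree m (k+1)) x (root m (k+1)) : ℝ) ≤ Fintype.card (TreeVert m k) := by
      exact_mod_cast br_root_upper k c x hx
    rw [← this, gain_self]
    simp only [Nat.cast_zero, mul_zero, add_zero]
    gcongr
  · cases k with
    | zero =>
      have := hb.length_le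
      have h2 := x.2
      simp at this
      omega
    | succ j =>
      obtain ⟨h1, h2⟩ := deep_upper j b c x hb
      have h3 : gain (CompleteTree m (j+1+1)) x (root m (j+1+1)) +
          gain (CompleteTree m (j+1+1)) x (ch m (j+1) c) ≤ Fintype.card (TreeVert m (j+1)) := by
        rw [card_succ]
        nlinarith
      have h3' : (gain (CompleteTree m (j+1+1)) x (root m (j+1+1)) : ℝ) +
          gain (CompleteTree m (j+1+1)) x (ch m (j+1) c) ≤ Fintype.card (TreeVert m (j+1)) := by
        exact_mod_cast h3
      calc _ ≤ Q * gain (CompleteTree m (j+1+1)) x (root m (j+1+1)) +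
            Q * gain (CompleteTree m (j+1+1)) x (ch m (j+1) c) := by gcongr
        _ = Q * ((gain (CompleteTree m (j+1+1)) x (root m (j+1+1)) : ℝ) +
          gain (CompleteTree m (j+1+1)) x (ch m (j+1) c)) := by ring
        _ ≤ _ := by gcongr

lemma upper (k : ℕ) (hm : 2 ≤ m) (x : TreeVert m (k+1)) (s : ℝ)
    (hs : s = Fintype.card (TreeVert m k)) :
    (m + ((m:ℝ)-1)^2 * s) * gain (CompleteTree m (k+1)) x (root m (k+1)) +
      s * ∑ c, (gain (CompleteTree m (k+1)) x (ch m k c) : ℝ) ≤ m * s * (1 + (m-1) * s) := by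
  have hs0 : 0 ≤ s := hs ▸ Nat.cast_nonneg _
  have hm' : (2:ℝ) ≤ m := by exact_mod_cast hm
  rcases cases_vert k x with rfl | ⟨c, hc⟩
  · rw [gain_self]
    have : ∑ c, (gain (CompleteTree m (k+1)) (root m (k+1)) (ch m k c) : ℝ) ≤
        ∑ c : Fin m, (1 + (m-1) * s) := by
      apply Finset.sum_le_sum
      intro c _
      have h := root_upper k c
      rw [card_succ] at h
      have h' : (gain (CompleteTree m (k+1)) (root m (k+1)) (ch m k c) : ℝ) + s ≤ 1 + m * s := by
        rw [hs]; exact_mod_cast h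
      linarith
    simp at this
    simp only [Nat.cast_zero, mul_zero, zero_add]
    calc _ ≤ s * (m * (1 + (m-1)*s)) := by
          gcongr
          linarith
      _ = _ := by ring
  · have hQ : s ≤ m + ((m:ℝ)-1)^2 * s := by nlinarith [mul_nonneg hs0 (sub_nonneg.2 hm')]
    have h1 := br_pair k hm c x hc (m + ((m:ℝ)-1)^2 * s) (hs.symm.le.trans hQ)
    rw [← hs] at h1
    rw [← Finset.add_sum_erase _ _ (Finset.mem_univ c)]
    have h2 : ∑ c' ∈ Finset.univ.erase c, (gain (CompleteTree m (k+1)) x (ch m k c') : ℝ) ≤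
        ∑ c' ∈ Finset.univ.erase c, s := by
      apply Finset.sum_le_sum
      intro c' _
      rw [hs]
      exact_mod_cast br_ch_upper k c c' x hc
    rw [Finset.sum_const, Finset.card_erase_of_mem (Finset.mem_univ c)] at h2
    simp only [Finset.card_univ, Fintype.card_fin, nsmul_eq_mul] at h2
    rw [Nat.cast_sub (by omega)] at h2
    have h3 := mul_le_mul_of_nonneg_left h2 hs0
    push_cast at h3
    linarith

lemma lower (k : ℕ) (hm : 2 ≤ m) (y : TreeVert m (k+1)) (s : ℝ)
    (hs : s = Fintype.card (TreeVert m k)) :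
    m * s * (1 + (m-1) * s) ≤ s * gain (CompleteTree m (k+1)) (root m (k+1)) y +
      (1 + (m-1) * s) * ∑ c, (gain (CompleteTree m (k+1)) (ch m k c) y : ℝ) := by
  have hs0 : 0 ≤ s := hs ▸ Nat.cast_nonneg _
  have hm' : (2:ℝ) ≤ m := by exact_mod_cast hm
  have hB : 0 ≤ 1 + (m-1) * s := by nlinarith
  rcases cases_vert k y with rfl | ⟨c, hc⟩
  · rw [gain_self]
    have : ∑ c : Fin m, s ≤
        ∑ c, (gain (CompleteTree m (k+1)) (ch m k c) (root m (k+1)) : ℝ) := by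
      apply Finset.sum_le_sum
      intro c _
      rw [hs]
      exact_mod_cast ch_lower k c (root m (k+1)) (by simp [root])
    simp at this
    simp only [Nat.cast_zero, mul_zero, zero_add]
    calc _ = (1 + (m-1)*s) * (m * s) := by ring
      _ ≤ _ := by gcongr
  · have h1 := root_lower k c y hc
    rw [card_succ] at h1
    have h1' : 1 + m * s ≤ (gain (CompleteTree m (k+1)) (root m (k+1)) y : ℝ) + s := by
      rw [hs]; exact_mod_cast h1
    rw [← Finset.add_sum_erase _ _ (Finset.mem_univ c)]
    have h2 : ∑ c' ∈ Finset.univ.erase c, s ≤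
        ∑ c' ∈ Finset.univ.erase c, (gain (CompleteTree m (k+1)) (ch m k c') y : ℝ) := by
      apply Finset.sum_le_sum
      intro c' hc'
      rw [hs]
      have : ¬ [c'] <:+ y.1 := fun h => (Finset.ne_of_mem_erase hc') (br_unique h hc)
      exact_mod_cast ch_lower k c' y this
    rw [Finset.sum_const, Finset.card_erase_of_mem (Finset.mem_univ c)] at h2
    simp only [Finset.card_univ, Fintype.card_fin, nsmul_eq_mul] at h2
    rw [Nat.cast_sub (by omega)] at h2
    have h3 := mul_le_mul_of_nonneg_left h2 hB
    have h4 := mul_le_mul_of_nonneg_left h1' hs0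
    have h5 : 0 ≤ (1 + (m-1) * s) * (gain (CompleteTree m (k+1)) (ch m k c) y : ℝ) :=
      mul_nonneg hB (Nat.cast_nonneg _)
    push_cast at h3
    linarith

lemma Gain_pure {V : Type*} [Fintype V] [DecidableEq V] (G : SimpleGraph V) (X : V → ℝ) (y : V) :
    Gain G X (pureStrat y) = ∑ x, X x * gain G x y := by
  simp [Gain, pureStrat]

lemma main (k : ℕ) (hm : 2 ≤ m) (s D : ℝ) (hs : s = Fintype.card (TreeVert m k))
    (hD : D = m + s * (1 + m^2 - m)) :
    safetyValue (CompleteTree m (k+1)) = m * s * (1 + (m-1) * s) / D := by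
  have hs0 : 0 ≤ s := hs ▸ Nat.cast_nonneg _
  have hm' : (2:ℝ) ≤ m := by exact_mod_cast hm
  have hB : 0 ≤ 1 + (m-1) * s := by nlinarith
  have hD0 : 0 < D := by
    have : 0 ≤ s * (1 + m^2 - m) := mul_nonneg hs0 (by nlinarith)
    linarith
  have hub : ∀ X : {X : TreeVert m (k+1) → ℝ // (∀ v, 0 ≤ X v) ∧ ∑ v, X v = 1},
      Finset.univ.inf' Finset.univ_nonempty
        (fun y => Gain (CompleteTree m (k+1)) X.1 (pureStrat y)) ≤
        m * s * (1 + (m-1) * s) / D := by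
    rintro ⟨X, hX0, hX1⟩
    set w := Finset.univ.inf' Finset.univ_nonempty
        (fun y => Gain (CompleteTree m (k+1)) X (pureStrat y)) with hw
    have hwy : ∀ y, w ≤ ∑ x, X x * gain (CompleteTree m (k+1)) x y := by
      intro y
      rw [← Gain_pure]
      exact Finset.inf'_le _ (Finset.mem_univ y)
    rw [le_div_iff₀ hD0]
    have e1 : w * m ≤ ∑ c, ∑ x, X x * gain (CompleteTree m (k+1)) x (ch m k c) := by
      calc w * m = ∑ c : Fin m, w := by simp [mul_comm]
        _ ≤ _ := Finset.sum_le_sum fun c _ => hwy _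
    have hQ : 0 ≤ m + ((m:ℝ)-1)^2 * s := by positivity
    calc w * D = (m + ((m:ℝ)-1)^2 * s) * w + s * (w * m) := by rw [hD]; ring
      _ ≤ (m + ((m:ℝ)-1)^2 * s) * (∑ x, X x * gain (CompleteTree m (k+1)) x (root m (k+1))) +
          s * ∑ c, ∑ x, X x * gain (CompleteTree m (k+1)) x (ch m k c) := by
          gcongr
          exact hwy _
      _ = ∑ x, X x * ((m + ((m:ℝ)-1)^2 * s) * gain (CompleteTree m (k+1)) x (root m (k+1)) +
            s * ∑ c, (gain (CompleteTree m (k+1)) x (ch m k c) : ℝ)) := by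
          rw [Finset.sum_comm, Finset.mul_sum, Finset.mul_sum, ← Finset.sum_add_distrib]
          refine Finset.sum_congr rfl fun x _ => ?_
          rw [← Finset.mul_sum]
          ring
      _ ≤ ∑ x, X x * (m * s * (1 + (m-1) * s)) :=
          Finset.sum_le_sum fun x _ => mul_le_mul_of_nonneg_left (upper k hm x s hs) (hX0 x)
      _ = _ := by rw [← Finset.sum_mul, hX1, one_mul]
  let X : TreeVert m (k+1) → ℝ := fun v =>
    (s * (if v = root m (k+1) then 1 else 0) +
      (1 + (m-1) * s) * ∑ c, (if v = ch m k c then (1:ℝ) else 0)) / D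
  have hsum : ∀ f : TreeVert m (k+1) → ℝ, ∑ v, X v * f v =
      (s * f (root m (k+1)) + (1 + (m-1) * s) * ∑ c, f (ch m k c)) / D := by
    intro f
    have : ∀ v, X v * f v = (s * (if v = root m (k+1) then f v else 0) +
      (1 + (m-1) * s) * ∑ c, (if v = ch m k c then f v else 0)) / D := by
      intro v
      have e : ∑ c, (if v = ch m k c then f v else 0) =
          (∑ c, (if v = ch m k c then (1:ℝ) else 0)) * f v := by
        rw [Finset.sum_mul]; simp
      rw [e]
      simp only [X]
      split_ifs <;> ring
    simp_rw [this]
    rw [← Finset.sum_div, Finset.sum_add_distrib, ← Finset.mul_sum, ← Finset.mul_sum,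
      Finset.sum_comm]
    simp
  have hX0 : ∀ v, 0 ≤ X v := by
    intro v
    refine div_nonneg (add_nonneg (mul_nonneg hs0 ?_) (mul_nonneg hB ?_)) hD0.le
    · split_ifs <;> norm_num
    · exact Finset.sum_nonneg fun c _ => by split_ifs <;> norm_num
  have hX1 : ∑ v, X v = 1 := by
    have := hsum (fun _ => 1)
    simp only [mul_one] at this
    rw [this, div_eq_one_iff_eq hD0.ne', hD]
    simp
    ring
  unfold safetyValue
  apply le_antisymm
  · have : Nonempty {X : TreeVert m (k+1) → ℝ // (∀ v, 0 ≤ X v) ∧ ∑ v, X v = 1} :=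
      ⟨⟨X, hX0, hX1⟩⟩
    exact ciSup_le hub
  · refine le_trans ?_ (le_ciSup (f := fun X : {X : TreeVert m (k+1) → ℝ //
      (∀ v, 0 ≤ X v) ∧ ∑ v, X v = 1} => Finset.univ.inf' Finset.univ_nonempty
        (fun y => Gain (CompleteTree m (k+1)) X.1 (pureStrat y)))
          ⟨m * s * (1 + (m-1) * s) / D, ?_⟩ ⟨X, hX0, hX1⟩)
    · apply Finset.le_inf'
      intro y _
      rw [Gain_pure, hsum]
      gcongr
      exact lower k hm y s hs
    · rintro _ ⟨X, rfl⟩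
      exact hub X

end CTProof

/-- On the complete `m`-ary tree of height `h` with `n = (m^{h+1} - 1)/(m - 1)` vertices,
the safety value of Player 1 equals `(n-1)((m-1)n+1) / (n(m²-m+1)+m-1)`. -/
theorem stmt_11 (m h : ℕ) (hm : 2 ≤ m) (hh : 1 ≤ h)
    (n : ℝ) (hn : n = ((m : ℝ) ^ (h + 1) - 1) / ((m : ℝ) - 1)) :
    safetyValue (CompleteTree m h) =
      (n - 1) * (((m : ℝ) - 1) * n + 1) / (n * ((m : ℝ) ^ 2 - (m : ℝ) + 1) + (m : ℝ) - 1) := by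
  obtain ⟨k, rfl⟩ : ∃ k, h = k + 1 := ⟨h - 1, by omega⟩
  have hm' : (2:ℝ) ≤ m := by exact_mod_cast hm
  have hn' : n = 1 + m * (Fintype.card (TreeVert m k) : ℝ) := by
    rw [hn, div_eq_iff (by linarith), ← CTProof.card_eq, CTProof.card_succ]
    push_cast
    ring
  have hs0 : (0:ℝ) ≤ (Fintype.card (TreeVert m k) : ℝ) := Nat.cast_nonneg _
  rw [CTProof.main k hm _ _ rfl rfl, hn']
  generalize (Fintype.card (TreeVert m k) : ℝ) = s at hs0
  have : 0 ≤ s * (1 + (m:ℝ)^2 - m) := mul_nonneg hs0 (by nlinarith)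
  have hD : 0 < m + s * (1 + (m:ℝ)^2 - m) := by linarith
  have e : (1 + m * s) * ((m:ℝ)^2 - m + 1) + m - 1 = m * (m + s * (1 + (m:ℝ)^2 - m)) := by ring
  rw [e, div_eq_div_iff hD.ne' (by positivity)]
  ring
end

section
/- Let m ≥ 2 and h ≥ 1, and let T(m,h) be the complete m-ary tree of height h with n = (m^{h+1}−1)/(m−1) vertices. Then the maximal gain of Player 1 against the opposing strategy μ2 is MGain(T(m,h), μ2) = Gain(T(m,h), Z(root), μ2) = m^{h+1}(m^h−1)/(m^{h+2}−m^{h+1}+m^h−1) = (n−1)((m−1)n+1)/(n(m²−m+1)+m−1); in particular the maximum of Gain(T(m,h), Z(x), μ2) over vertices x is attained at the root. -/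
section helpers

theorem ct_adj {m h : ℕ} (x y : TreeVert m h) :
    (CompleteTree m h).Adj x y ↔ (∃ c, y.1 = c :: x.1) ∨ (∃ c, x.1 = c :: y.1) := by
  have key : ∀ x y : TreeVert m h, (x.1 = y.1.tail ∧ y.1.length = x.1.length + 1) ↔
      ∃ c, y.1 = c :: x.1 := by
    intro x y
    constructor
    · rintro ⟨h1, h2⟩
      cases hy : y.1 with
      | nil => simp [hy] at h2
      | cons c t => exact ⟨c, by simp [h1, hy]⟩
    · rintro ⟨c, hc⟩
      simp [hc]
  unfold CompleteTree
  rw [SimpleGraph.fromRel_adj, key, key]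
  constructor
  · exact fun h => h.2
  · intro h
    refine ⟨?_, h⟩
    rintro rfl
    rcases h with ⟨c, hc⟩ | ⟨c, hc⟩ <;> simpa using congrArg List.length hc

theorem ct_conn (m h : ℕ) : (CompleteTree m h).Connected := by
  have key : ∀ (l : List (Fin m)) (hl : l.length ≤ h),
      (CompleteTree m h).Reachable (root m h) ⟨l, hl⟩ := by
    intro l
    induction l with
    | nil => intro hl; exact SimpleGraph.Reachable.refl _
    | cons c t ih =>
      intro hl
      have ht : t.length ≤ h := by simp at hl; omega
      refine (ih ht).trans (SimpleGraph.Adj.reachable ?_)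
      exact (ct_adj _ _).2 (Or.inl ⟨c, rfl⟩)
  refine ⟨fun x y => ?_⟩
  exact (key x.1 x.2).symm.trans (key y.1 y.2)

/-- Cut-edge lemma for the subtree of `v`, whose parent is `p`. -/
theorem ct_cut {m h : ℕ} (p v : TreeVert m h) (c : Fin m) (hv : v.1 = c :: p.1)
    {u x : TreeVert m h} (w : (CompleteTree m h).Walk u x) :
    v.1 <:+ x.1 → ¬ v.1 <:+ u.1 →
    (CompleteTree m h).dist u p + 1 + (CompleteTree m h).dist v x ≤ w.length := by
  induction w with
  | nil => intro h1 h2; exact absurd h1 h2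
  | @cons u u' x hadj w ih =>
    intro hx hu
    rw [SimpleGraph.Walk.length_cons]
    by_cases hu' : v.1 <:+ u'.1
    · have hadj' := (ct_adj _ _).1 hadj
      rcases hadj' with ⟨d, hd⟩ | ⟨d, hd⟩
      · rw [hd, List.suffix_cons_iff] at hu'
        rcases hu' with h1 | h1
        · have e1 : v = u' := Subtype.ext (h1.trans hd.symm)
          have e2 : p = u := by
            apply Subtype.ext
            rw [hv] at h1
            exact (List.cons.inj h1).2
          subst e1 e2
          have := SimpleGraph.dist_le w
          simp
          omega
        · exact absurd h1 hu
      · exact absurd (hu'.trans (by rw [hd]; exact List.suffix_cons _ _)) hu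
    · have h1 := ih hx hu'
      have h2 := (ct_conn m h).dist_triangle (u := u) (v := u') (w := p)
      have h3 : (CompleteTree m h).dist u u' = 1 := SimpleGraph.dist_eq_one_iff_adj.2 hadj
      omega

theorem ct_cut' {m h : ℕ} (p v : TreeVert m h) (c : Fin m) (hv : v.1 = c :: p.1)
    {u x : TreeVert m h} (hx : v.1 <:+ x.1) (hu : ¬ v.1 <:+ u.1) :
    (CompleteTree m h).dist u p + 1 + (CompleteTree m h).dist v x ≤
      (CompleteTree m h).dist u x := by
  obtain ⟨w, hw⟩ := (ct_conn m h).exists_walk_length_eq_dist u x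
  rw [← hw]
  exact ct_cut p v c hv w hx hu

theorem ct_gain_le {m h : ℕ} (p v : TreeVert m h) (c : Fin m) (hv : v.1 = c :: p.1)
    {x y : TreeVert m h} (hx : v.1 <:+ x.1) (hy : (CompleteTree m h).dist p y ≤ 1) :
    gain (CompleteTree m h) x y ≤ {u : TreeVert m h | v.1 <:+ u.1}.ncard := by
  unfold gain
  apply Set.ncard_le_ncard _ (Set.toFinite _)
  intro u hu
  by_contra hc
  have h1 := ct_cut' p v c hv hx hc
  have h2 := (ct_conn m h).dist_triangle (u := u) (v := p) (w := y)
  simp only [Set.mem_ofPred_eq] at hu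
  omega

theorem ct_gain_parent {m h : ℕ} (p v : TreeVert m h) (c : Fin m) (hv : v.1 = c :: p.1) :
    gain (CompleteTree m h) p v = {u : TreeVert m h | v.1 <:+ u.1}ᶜ.ncard := by
  unfold gain
  congr 1
  ext u
  simp only [Set.mem_ofPred_eq, Set.mem_compl_iff]
  constructor
  · intro h1 h2
    have h3 := ct_cut' p v c hv (u := p) h2 (by
      intro h4
      have := h4.length_le
      simp [hv] at this)
    rw [SimpleGraph.dist_comm (u := p) (v := u), SimpleGraph.dist_comm (u := v)] at h3
    omega
  · intro h1
    have h3 := ct_cut' p v c hv (List.suffix_refl _) h1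
    omega

theorem ct_gain_self {m h : ℕ} (x : TreeVert m h) : gain (CompleteTree m h) x x = 0 := by
  simp [gain]

/-- number of lists of length at most `j` -/
noncomputable def ctN (m j : ℕ) : ℕ := {l : List (Fin m) | l.length ≤ j}.ncard

theorem ctN_zero (m : ℕ) : ctN m 0 = 1 := by
  unfold ctN
  have : {l : List (Fin m) | l.length ≤ 0} = {[]} := by ext l; simp
  rw [this, Set.ncard_singleton]

theorem ctN_succ (m j : ℕ) : ctN m (j + 1) = ctN m j + m ^ (j + 1) := by
  unfold ctN
  have h1 : {l : List (Fin m) | l.length ≤ j + 1} =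
      {l : List (Fin m) | l.length ≤ j} ∪ {l : List (Fin m) | l.length = j + 1} := by
    ext l; simp; omega
  rw [h1, Set.ncard_union_eq ?_ (List.finite_length_le _ _) (List.finite_length_eq _ _)]
  · congr 1
    have : {l : List (Fin m) | l.length = j + 1}.ncard = Nat.card (List.Vector (Fin m) (j + 1)) := rfl
    rw [this, Nat.card_eq_fintype_card, card_vector, Fintype.card_fin]
  · rw [Set.disjoint_left]
    intro l h1 h2
    simp at h1 h2
    omega

theorem ctN_formula (m j : ℕ) : ((m : ℝ) - 1) * ctN m j = (m : ℝ) ^ (j + 1) - 1 := by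
  induction j with
  | zero => simp [ctN_zero]
  | succ j ih => rw [ctN_succ]; push_cast; rw [mul_add, ih]; ring

theorem ct_sub_card {m h : ℕ} (v : TreeVert m h) :
    {u : TreeVert m h | v.1 <:+ u.1}.ncard = ctN m (h - v.1.length) := by
  unfold ctN
  symm
  have hv := v.2
  refine Set.ncard_congr (fun t ht => ⟨t ++ v.1, by
    simp only [Set.mem_ofPred_eq] at ht; rw [List.length_append]; omega⟩) ?_ ?_ ?_
  · intro t ht
    exact List.suffix_append _ _
  · intro a b ha hb hab
    have := congrArg Subtype.val hab
    exact List.append_cancel_right this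
  · rintro u ⟨t, ht⟩
    refine ⟨t, ?_, Subtype.ext ht⟩
    have h1 := u.2
    rw [← ht, List.length_append] at h1
    simp only [Set.mem_ofPred_eq]
    omega

theorem ct_total (m h : ℕ) : Nat.card (TreeVert m h) = ctN m h := rfl

def ctChild {m h : ℕ} (hh : 1 ≤ h) (i : Fin m) : TreeVert m h := ⟨[i], by simpa using hh⟩

theorem ct_Gain {m h : ℕ} (hh : 1 ≤ h) (x : TreeVert m h) :
    Gain (CompleteTree m h) (pureStrat x) (mu2 m h) =
      alpha2 m h * gain (CompleteTree m h) x (root m h) +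
        ∑ i : Fin m, beta2 m h * gain (CompleteTree m h) x (ctChild hh i) := by
  unfold Gain
  rw [Finset.sum_eq_single x]
  · simp only [pureStrat, if_true, one_mul]
    symm
    have h1 := Fintype.sum_of_injective
      (fun o : Option (Fin m) => (o.elim (root m h) (ctChild hh) : TreeVert m h))
      (by
        intro a b hab
        have h2 := congrArg Subtype.val hab
        rcases a with _ | a <;> rcases b with _ | b
        · rfl
        · exact absurd (show ([] : List (Fin m)) = [b] from h2) (by simp)
        · exact absurd (show [a] = ([] : List (Fin m)) from h2) (by simp)
        · have h3 : [a] = [b] := h2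
          simpa using h3)
      (fun o : Option (Fin m) => (o.elim (alpha2 m h * gain (CompleteTree m h) x (root m h))
        (fun i => beta2 m h * gain (CompleteTree m h) x (ctChild hh i)) : ℝ))
      (fun y => mu2 m h y * gain (CompleteTree m h) x y)
      (by
        intro y hy
        have : mu2 m h y = 0 := by
          unfold mu2
          rw [if_neg, if_neg]
          · intro h1
            apply hy
            obtain ⟨i, hi⟩ := List.length_eq_one_iff.1 h1
            exact ⟨some i, Subtype.ext hi.symm⟩
          · intro h1
            apply hy
            exact ⟨none, Subtype.ext (List.length_eq_zero_iff.1 h1).symm⟩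
        simp [this])
      (by
        intro o
        rcases o with _ | i
        · have : mu2 m h (root m h) = alpha2 m h := if_pos rfl
          change _ = mu2 m h (root m h) * _
          rw [this]; rfl
        · have : mu2 m h (ctChild hh i) = beta2 m h := by
            unfold mu2
            rw [if_neg (by simp [ctChild])]
            exact if_pos rfl
          change _ = mu2 m h (ctChild hh i) * _
          rw [this]; rfl)
    rw [← h1, Fintype.sum_option]
    rfl
  · intro b _ hb
    simp [pureStrat, hb]
  · simp

theorem ct_sum_le {m : ℕ} (j : Fin m) (g : Fin m → ℕ) (s t : ℕ) (hj : g j ≤ t)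
    (hg : ∀ i, g i ≤ s) : ∑ i, (g i : ℝ) ≤ ((m : ℝ) - 1) * s + t := by
  have h1 : ∀ i ∈ Finset.univ, (g i : ℝ) ≤ (s : ℝ) + if i = j then (t : ℝ) - s else 0 := by
    intro i _
    split_ifs with hi
    · subst hi
      have : (g i : ℝ) ≤ t := by exact_mod_cast hj
      linarith
    · have : (g i : ℝ) ≤ s := by exact_mod_cast hg i
      linarith
  refine (Finset.sum_le_sum h1).trans (le_of_eq ?_)
  rw [Finset.sum_add_distrib]
  simp
  ring

theorem ct_dist_root_child {m h : ℕ} (hh : 1 ≤ h) (i : Fin m) :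
    (CompleteTree m h).dist (root m h) (ctChild hh i) = 1 := by
  rw [SimpleGraph.dist_eq_one_iff_adj, ct_adj]
  exact Or.inl ⟨i, rfl⟩

theorem ct_root_gain {m h : ℕ} (hh : 1 ≤ h) :
    Gain (CompleteTree m h) (pureStrat (root m h)) (mu2 m h) =
      m * beta2 m h * (m : ℝ) ^ h := by
  rw [ct_Gain hh]
  have h1 : ∀ i : Fin m, gain (CompleteTree m h) (root m h) (ctChild hh i) = m ^ h := by
    intro i
    rw [ct_gain_parent (root m h) (ctChild hh i) i rfl, Set.ncard_compl, ct_total, ct_sub_card]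
    obtain ⟨k, rfl⟩ : ∃ k, h = k + 1 := ⟨h - 1, by omega⟩
    rw [ctN_succ]
    simp [ctChild]
  simp only [h1, ct_gain_self]
  simp
  ring

theorem ct_D_pos {m h : ℕ} (hm : 2 ≤ m) (hh : 1 ≤ h) :
    0 < (m : ℝ) ^ (h + 2) - (m : ℝ) ^ (h + 1) + (m : ℝ) ^ h - 1 := by
  have hm' : (2 : ℝ) ≤ m := by exact_mod_cast hm
  have h1 : (1 : ℝ) < (m : ℝ) ^ h := one_lt_pow₀ (by linarith) (by omega)
  have h2 : (m : ℝ) ^ (h + 2) - (m : ℝ) ^ (h + 1) = (m : ℝ) ^ h * (m * (m - 1)) := by ring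
  have h3 : 0 ≤ (m : ℝ) ^ h * (m * (m - 1)) := by
    apply mul_nonneg (by positivity)
    apply mul_nonneg (by positivity); linarith
  linarith

end helpers

/-- On the complete `m`-ary tree of height `h`, the maximal gain of Player 1 against the
opposing strategy `μ₂` (the maximum over vertices `x` of `Gain(T, Z(x), μ₂)`) is attained
at the root and equals `m^{h+1}(m^h - 1)/(m^{h+2} - m^{h+1} + m^h - 1)`, which equals
`(n-1)((m-1)n+1)/(n(m²-m+1)+m-1)` where `n = (m^{h+1}-1)/(m-1)`. -/
theorem stmt_13 (m h : ℕ) (hm : 2 ≤ m) (hh : 1 ≤ h)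
    (n : ℝ) (hn : n = ((m : ℝ) ^ (h + 1) - 1) / ((m : ℝ) - 1)) :
    Finset.univ.sup' Finset.univ_nonempty
        (fun x : TreeVert m h => Gain (CompleteTree m h) (pureStrat x) (mu2 m h)) =
      Gain (CompleteTree m h) (pureStrat (root m h)) (mu2 m h) ∧
    Gain (CompleteTree m h) (pureStrat (root m h)) (mu2 m h) =
      (m : ℝ) ^ (h + 1) * ((m : ℝ) ^ h - 1) /
        ((m : ℝ) ^ (h + 2) - (m : ℝ) ^ (h + 1) + (m : ℝ) ^ h - 1) ∧
    (m : ℝ) ^ (h + 1) * ((m : ℝ) ^ h - 1) /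
        ((m : ℝ) ^ (h + 2) - (m : ℝ) ^ (h + 1) + (m : ℝ) ^ h - 1) =
      (n - 1) * (((m : ℝ) - 1) * n + 1) / (n * ((m : ℝ) ^ 2 - (m : ℝ) + 1) + (m : ℝ) - 1) := by
  have hm' : (2 : ℝ) ≤ m := by exact_mod_cast hm
  have hD := ct_D_pos hm hh
  have hM : (1 : ℝ) < (m : ℝ) ^ h := one_lt_pow₀ (by linarith) (by omega)
  have hroot := ct_root_gain (m := m) hh
  have hβ : 0 ≤ beta2 m h := by
    unfold beta2; exact div_nonneg (by linarith) hD.le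
  have hαβ : beta2 m h ≤ alpha2 m h := by
    unfold beta2 alpha2
    apply div_le_div_of_nonneg_right _ hD.le
    have : (m : ℝ) ^ (h + 1) = (m : ℝ) ^ h * m := pow_succ _ _
    rw [this]
    nlinarith [mul_nonneg (sub_nonneg.2 hM.le) (sq_nonneg ((m : ℝ) - 1)),
      mul_nonneg (by linarith : 0 ≤ (m : ℝ) ^ h) (by nlinarith : (0 : ℝ) ≤ ((m : ℝ) - 1) ^ 2 - 1)]
  have hs : ((m : ℝ) - 1) * ctN m (h - 1) = (m : ℝ) ^ h - 1 := by
    rw [ctN_formula]; congr 2; omega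
  have heq : (ctN m (h - 1) : ℝ) * (alpha2 m h + (m - 1) * beta2 m h) =
      m * beta2 m h * (m : ℝ) ^ h := by
    have h1 : alpha2 m h + (m - 1) * beta2 m h = (m - 1) * ((m : ℝ) ^ (h + 1) /
        ((m : ℝ) ^ (h + 2) - (m : ℝ) ^ (h + 1) + (m : ℝ) ^ h - 1)) := by
      unfold alpha2 beta2
      field_simp
      ring
    rw [h1, ← mul_assoc, mul_comm (ctN m (h - 1) : ℝ), hs]
    unfold beta2
    field_simp
    ring
  refine ⟨?_, ?_, ?_⟩
  · apply le_antisymm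
    · apply Finset.sup'_le
      intro x _
      rw [hroot, ← heq]
      have hl := x.2
      rcases List.eq_nil_or_concat x.1 with hx0 | ⟨l', j, hlj⟩
      · have : x = root m h := Subtype.ext hx0
        rw [heq, ← hroot, this]
      rw [List.concat_eq_append] at hlj
      have hsuf : (ctChild hh j : TreeVert m h).1 <:+ x.1 := hlj ▸ List.suffix_append _ _
      have hgs : ∀ y, (CompleteTree m h).dist (root m h) y ≤ 1 →
          gain (CompleteTree m h) x y ≤ ctN m (h - 1) := by
        intro y hy
        refine (ct_gain_le (root m h) (ctChild hh j) j rfl hsuf hy).trans (le_of_eq ?_)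
        rw [ct_sub_card]; rfl
      rw [ct_Gain hh, ← Finset.mul_sum]
      rcases List.eq_nil_or_concat l' with rfl | ⟨l'', i, hli⟩
      · have hxj : x = ctChild hh j := Subtype.ext hlj
        have hsum := ct_sum_le j
          (fun i => gain (CompleteTree m h) x (ctChild hh i)) (ctN m (h - 1)) 0
          (le_of_eq (by rw [hxj]; exact ct_gain_self _)) (fun i => hgs _ (ct_dist_root_child hh i).le)
        have h0 : (gain (CompleteTree m h) x (root m h) : ℝ) ≤ ctN m (h - 1) := by
          exact_mod_cast hgs _ (by simp)
        have e1 := mul_le_mul_of_nonneg_left hsum hβ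
        have e2 := mul_le_mul_of_nonneg_left h0 (hβ.trans hαβ)
        push_cast at e1
        linarith
      · rw [List.concat_eq_append] at hli
        subst hli
        have hh2 : 2 ≤ h := by simp [hlj] at hl; omega
        let c : TreeVert m h := ⟨[i, j], by simpa using hh2⟩
        have hsuf2 : c.1 <:+ x.1 := ⟨l'', by simp [c, hlj]⟩
        have hgs2 : ∀ y, (CompleteTree m h).dist (ctChild hh j) y ≤ 1 →
            gain (CompleteTree m h) x y ≤ ctN m (h - 2) := by
          intro y hy
          refine (ct_gain_le (ctChild hh j) c i rfl hsuf2 hy).trans (le_of_eq ?_)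
          rw [ct_sub_card]; rfl
        have hsum := ct_sum_le j
          (fun k => gain (CompleteTree m h) x (ctChild hh k))
          (ctN m (h - 1)) (ctN m (h - 2))
          (hgs2 _ (by simp)) (fun i => hgs _ (ct_dist_root_child hh i).le)
        have h0 : (gain (CompleteTree m h) x (root m h) : ℝ)
            ≤ ctN m (h - 2) := by
          exact_mod_cast hgs2 _ (by rw [SimpleGraph.dist_comm, ct_dist_root_child])
        have e1 := mul_le_mul_of_nonneg_left hsum hβ
        have e2 := mul_le_mul_of_nonneg_left h0 (hβ.trans hαβ)
        have hs2 : ((m : ℝ) - 1) * ctN m (h - 2) = (m : ℝ) ^ (h - 1) - 1 := by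
          rw [ctN_formula]; congr 2; omega
        have hpow : (m : ℝ) ^ h = m * (m : ℝ) ^ (h - 1) := by
          rw [← pow_succ']; congr 1; omega
        have hss : (ctN m (h - 1) : ℝ) = m * ctN m (h - 2) + 1 := by
          have : ((m : ℝ) - 1) ≠ 0 := by linarith
          apply mul_left_cancel₀ this
          rw [hs, hpow]
          linear_combination (-(m : ℝ)) * hs2
        have e3 : (ctN m (h - 2) : ℝ) * (alpha2 m h + beta2 m h) ≤
            ctN m (h - 1) * alpha2 m h := by
          have hα := hβ.trans hαβ
          have hc : (0 : ℝ) ≤ ctN m (h - 2) := Nat.cast_nonneg _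
          rw [hss]
          nlinarith [mul_nonneg hc (sub_nonneg.2 hαβ), mul_nonneg (mul_nonneg hc hα)
            (sub_nonneg.2 hm')]
        linarith
    · exact Finset.le_sup' (fun x : TreeVert m h =>
        Gain (CompleteTree m h) (pureStrat x) (mu2 m h)) (Finset.mem_univ _)
  · rw [hroot]
    unfold beta2
    field_simp
    ring
  · have h1 : (m : ℝ) - 1 ≠ 0 := by linarith
    have hn1 : ((m : ℝ) - 1) * n + 1 = (m : ℝ) ^ (h + 1) := by
      rw [hn]; field_simp; ring
    have hden : (n * ((m : ℝ) ^ 2 - (m : ℝ) + 1) + (m : ℝ) - 1) * ((m : ℝ) - 1) =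
        m * ((m : ℝ) ^ (h + 2) - (m : ℝ) ^ (h + 1) + (m : ℝ) ^ h - 1) := by
      linear_combination ((m : ℝ) ^ 2 - (m : ℝ) + 1) * hn1
    have hnum : (n - 1) * ((m : ℝ) - 1) = m * ((m : ℝ) ^ h - 1) := by
      linear_combination hn1
    have hden0 : n * ((m : ℝ) ^ 2 - (m : ℝ) + 1) + (m : ℝ) - 1 ≠ 0 := by
      intro h0
      rw [h0, zero_mul] at hden
      have : 0 < (m : ℝ) * ((m : ℝ) ^ (h + 2) - (m : ℝ) ^ (h + 1) + (m : ℝ) ^ h - 1) :=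
        mul_pos (by linarith) hD
      linarith
    rw [hn1, div_eq_div_iff hD.ne' hden0]
    apply mul_left_cancel₀ h1
    have hm0 : (m : ℝ) ≠ 0 := by linarith
    linear_combination (m : ℝ) ^ (h + 1) * ((m : ℝ) ^ h - 1) * hden - (m : ℝ) ^ (h + 1) * ((m : ℝ) ^ (h + 2) - (m : ℝ) ^ (h + 1) + (m : ℝ) ^ h - 1) * hnum
end
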